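/- Let X = ℝⁿ, T ∈ ℕ, x₀ ∈ X, and let f : X^{T+1} → EReal be Borel measurable. Then sup_{μ ∈ M^T(x₀)} μ[f] = sup_M E[f(M₀,…,M_T)], where the supremum on the right-hand side is taken over all ℝⁿ-valued martingales M₀,…,M_T with M₀ = x₀, each on its own filtered probability space (with the expectation of the EReal-valued random variable f(M₀,…,M_T) computed using the convention ∞ − ∞ = −∞). -/

import Mathlib

/-- A finitely supported probability measure on `X^{T+1}` under which the coordinate
process is a martingale in its natural filtration, starting at `x₀`; an element of
`M^T(x₀)` (the law of a simple martingale `M₀, …, M_T` with `M₀ = x₀`).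
The martingale property is expressed by testing the increment `π(t+1) - π(t)`
against all functions `h` of the path depending only on the first `t+1` coordinates. -/
structure MartLaw (X : Type*) [AddCommGroup X] [Module ℝ X] (T : ℕ) (x₀ : X) where
  supp : Finset (Fin (T + 1) → X)
  w : (Fin (T + 1) → X) → ℝ
  nonneg : ∀ π, 0 ≤ w π
  zero_off : ∀ π ∉ supp, w π = 0
  total : ∑ π ∈ supp, w π = 1
  init : ∀ π ∈ supp, w π ≠ 0 → π 0 = x₀
  mart : ∀ t : Fin T, ∀ h : (Fin (T + 1) → X) → ℝ,
    (∀ π π' : Fin (T + 1) → X, (∀ s : Fin (T + 1), s ≤ t.castSucc → π s = π' s) → h π = h π') →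
    ∑ π ∈ supp, (w π * h π) • (π t.succ - π t.castSucc) = 0

/-- The integral `μ[f]` of an `EReal`-valued function on path space under a finitely
supported martingale law, as a finite sum in `EReal`. -/
noncomputable def MartLaw.exp {X : Type*} [AddCommGroup X] [Module ℝ X] {T : ℕ} {x₀ : X}
    (μ : MartLaw X T x₀) (f : (Fin (T + 1) → X) → EReal) : EReal :=
  ∑ π ∈ μ.supp, (μ.w π : EReal) * f π

open MeasureTheory

/-- The positive part of an extended real number, valued in `ℝ≥0∞`. -/
noncomputable def erealPosPart (x : EReal) : ENNReal :=
  if x = ⊤ then ⊤ else ENNReal.ofReal x.toReal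

/-- The expectation of an `EReal`-valued random variable, computed with the convention
`∞ - ∞ = -∞` (note that `⊤ - ⊤ = ⊥` in `EReal`). -/
noncomputable def erealExp {Ω : Type*} [MeasurableSpace Ω] (μ : Measure Ω)
    (g : Ω → EReal) : EReal :=
  ((∫⁻ ω, erealPosPart (g ω) ∂μ : ENNReal) : EReal)
    - ((∫⁻ ω, erealPosPart (-g ω) ∂μ : ENNReal) : EReal)


theorem bary_exists_functional {V : Type*} [NormedAddCommGroup V] [NormedSpace ℝ V]
    [FiniteDimensional ℝ V] (C : Set V) (hC : Convex ℝ C) (hne : C.Nonempty) (h0 : (0 : V) ∉ C) :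
    ∃ f : StrongDual ℝ V, f ≠ 0 ∧ ((∀ a ∈ C, f a ≤ 0) ∨ ∃ c, ∀ a ∈ C, f a = c) := by
  by_cases hi : (interior C).Nonempty
  · obtain ⟨f, u, hf, h1, h2⟩ := geometric_hahn_banach_of_nonempty_interior hC
      (convex_singleton (0 : V)) (by
        rw [Set.disjoint_singleton_right]
        exact fun h => h0 (interior_subset h)) hi (Set.singleton_nonempty _)
    refine ⟨f, hf, Or.inl fun a ha => (h1 a ha).trans ?_⟩
    simpa using h2 0 rfl
  · rw [hC.interior_nonempty_iff_affineSpan_eq_top] at hi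
    obtain ⟨c0, hc0⟩ := hne
    have hd : vectorSpan ℝ C ≠ ⊤ := by
      intro h
      apply hi
      rw [AffineSubspace.affineSpan_eq_top_iff_vectorSpan_eq_top_of_nonempty ℝ V V ⟨c0, hc0⟩]
      exact h
    obtain ⟨f, hf, hk⟩ := Submodule.exists_le_ker_of_lt_top _ (lt_top_iff_ne_top.2 hd)
    refine ⟨LinearMap.toContinuousLinearMap f, by simpa using hf, Or.inr ⟨f c0, fun a ha => ?_⟩⟩
    have := hk (vsub_mem_vectorSpan ℝ ha hc0)
    simpa [sub_eq_zero] using this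

theorem bary_zero {Ω : Type*} [MeasurableSpace Ω] (μ : Measure Ω) [IsProbabilityMeasure μ]
    (d : ℕ) : ∀ (V : Type) [NormedAddCommGroup V] [NormedSpace ℝ V]
    [FiniteDimensional ℝ V] (_ : Module.finrank ℝ V = d) (C : Set V) (_ : Convex ℝ C)
    (φ : Ω → V) (_ : Integrable φ μ) (_ : ∀ᵐ ω ∂μ, φ ω ∈ C) (_ : ∫ ω, φ ω ∂μ = 0),
    (0 : V) ∈ C := by
  induction d using Nat.strong_induction_on with
  | _ d ih =>
  intro V _ _ _ hd C hC φ hφ hφC hIntEq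
  by_contra h0
  obtain ⟨ω0, hω0⟩ := hφC.exists
  obtain ⟨f, hf, hor⟩ := bary_exists_functional C hC ⟨_, hω0⟩ h0
  have hfint : ∫ ω, f (φ ω) ∂μ = 0 := by
    rw [f.integral_comp_comm hφ, hIntEq, map_zero]
  have hfφ : Integrable (fun ω => f (φ ω)) μ := f.integrable_comp hφ
  have hker : ∀ᵐ ω ∂μ, f (φ ω) = 0 := by
    rcases hor with h | ⟨c, hc⟩
    · have h1 : ∫ ω, -f (φ ω) ∂μ = 0 := by rw [integral_neg, hfint, neg_zero]
      rw [integral_eq_zero_iff_of_nonneg_ae] at h1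
      · filter_upwards [h1] with ω hω
        simpa using hω
      · filter_upwards [hφC] with ω hω
        simpa using h _ hω
      · exact hfφ.neg
    · have h1 : ∀ᵐ ω ∂μ, f (φ ω) = c := by
        filter_upwards [hφC] with ω hω using hc _ hω
      have h2 : c = 0 := by
        rw [integral_congr_ae h1] at hfint
        simpa using hfint
      simpa [h2] using h1
  let K : Submodule ℝ V := LinearMap.ker f.toLinearMap
  obtain ⟨p, hp⟩ := K.subtype.exists_leftInverse_of_injective K.ker_subtype
  let pc : V →L[ℝ] K := LinearMap.toContinuousLinearMap p
  have hpc : ∀ v : V, f v = 0 → ((pc v : K) : V) = v := by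
    intro v hv
    have := LinearMap.congr_fun hp (⟨v, hv⟩ : K)
    have h2 : p v = (⟨v, hv⟩ : K) := this
    change ((p v : K) : V) = v
    rw [h2]
  have hlt : Module.finrank ℝ K < d := by
    rw [← hd]
    apply Submodule.finrank_lt
    intro h
    apply hf
    ext v
    have : v ∈ K := by rw [h]; trivial
    exact this
  have := ih _ hlt K rfl (K.subtype ⁻¹' C) (hC.linear_preimage K.subtype) (fun ω => pc (φ ω))
    (pc.integrable_comp hφ) (by
      filter_upwards [hker, hφC] with ω h1 h2
      change ((pc (φ ω) : K) : V) ∈ C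
      rwa [hpc _ h1]) (by rw [pc.integral_comp_comm hφ, hIntEq, map_zero])
  exact h0 this

theorem bary_mem {Ω : Type*} [MeasurableSpace Ω] (μ : Measure Ω) [IsProbabilityMeasure μ]
    (V : Type) [NormedAddCommGroup V] [NormedSpace ℝ V]
    [FiniteDimensional ℝ V] (C : Set V) (hC : Convex ℝ C)
    (φ : Ω → V) (hφ : Integrable φ μ) (hφC : ∀ᵐ ω ∂μ, φ ω ∈ C) : ∫ ω, φ ω ∂μ ∈ C := by
  have := bary_zero μ _ V rfl ((fun z => z + ∫ ω, φ ω ∂μ) ⁻¹' C)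
    (hC.translate_preimage_left _) (fun ω => φ ω - ∫ ω, φ ω ∂μ)
    (hφ.sub (integrable_const _)) (by simpa using hφC)
    (by rw [integral_sub hφ (integrable_const _)]; simp)
  simpa using this

theorem setIntegral_zero_of_gen {Ω E : Type*} [m : MeasurableSpace Ω]
    [m1 : MeasurableSpace E] (μ : Measure Ω) {r : Ω → E} (hr : Measurable r)
    {n : ℕ} (φ : Ω → Fin n → ℝ)
    (hφ : Integrable φ μ) (S : Set (Set E)) (hS : m1 = MeasurableSpace.generateFrom S)
    (hpi : IsPiSystem S) (huniv : Set.univ ∈ S)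
    (h : ∀ B ∈ S, ∫ ω in r ⁻¹' B, φ ω ∂μ = 0) :
    ∀ B, MeasurableSet B → ∫ ω in r ⁻¹' B, φ ω ∂μ = 0 := by
  have hu : ∫ ω, φ ω ∂μ = 0 := by simpa using h _ huniv
  intro B hB
  induction B, hB using MeasurableSpace.induction_on_inter hS hpi with
  | empty => simp
  | basic t ht => exact h t ht
  | compl t ht ih =>
    have := integral_add_compl (hr ht) hφ
    rw [ih, hu, zero_add] at this
    exact this
  | iUnion g hd hm ih =>
    rw [Set.preimage_iUnion, integral_iUnion (fun i => hr (hm i))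
      (fun i j hij => (hd hij).preimage r) hφ.integrableOn]
    simp [ih]

theorem exists_countable_pi (E : Type*) [m1 : MeasurableSpace E]
    [MeasurableSpace.CountablyGenerated E] :
    ∃ S : Set (Set E), S.Countable ∧ m1 = MeasurableSpace.generateFrom S ∧ IsPiSystem S ∧
      Set.univ ∈ S := by
  have hA := isSetAlgebra_generateSetAlgebra (𝒜 := MeasurableSpace.countableGeneratingSet E)
  refine ⟨generateSetAlgebra (MeasurableSpace.countableGeneratingSet E),
    countable_generateSetAlgebra (MeasurableSpace.countable_countableGeneratingSet), ?_, ?_,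
    hA.univ_mem⟩
  · rw [generateFrom_generateSetAlgebra_eq,
      MeasurableSpace.generateFrom_countableGeneratingSet]
  · intro s hs t ht _
    exact hA.inter_mem hs ht

theorem martLaw_glue {X : Type*} [AddCommGroup X] [Module ℝ X] {T : ℕ} {x₀ : X}
    {ι : Type} [Fintype ι] (l : ι → ℝ) (hl : ∀ i, 0 ≤ l i) (hl1 : ∑ i, l i = 1)
    (x : ι → X) (hx : ∑ i, l i • x i = x₀) (ν : ∀ i, MartLaw X T (x i)) :
    ∃ ν' : MartLaw X (T + 1) x₀,
      (∀ F : (Fin (T + 2) → X) → ℝ, ∑ π ∈ ν'.supp, ν'.w π * F π =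
        ∑ i, l i * ∑ τ ∈ (ν i).supp, (ν i).w τ * F (Fin.cons x₀ τ : Fin (T + 2) → X)) ∧
      ∀ π, ν'.w π ≠ 0 → ∃ (i : ι) (τ : Fin (T + 1) → X),
        π = (Fin.cons x₀ τ : Fin (T + 2) → X) ∧ (ν i).w τ ≠ 0 := by
  classical
  let cn : (Fin (T + 1) → X) → (Fin (T + 2) → X) := fun τ => Fin.cons x₀ τ
  have hcn : Function.Injective cn := fun a b h => (Fin.cons_injective2 h).2
  let U : Finset (Fin (T + 1) → X) := Finset.univ.biUnion fun i => (ν i).supp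
  let S : Finset (Fin (T + 2) → X) := U.image cn
  let W : (Fin (T + 2) → X) → ℝ := fun π =>
    if π 0 = x₀ then ∑ i, l i * (ν i).w (Fin.tail π) else 0
  have hWcn : ∀ τ, W (cn τ) = ∑ i, l i * (ν i).w τ := by
    intro τ
    simp [W, cn]
  have hW : ∀ π, W π ≠ 0 → ∃ (i : ι) (τ : Fin (T + 1) → X), π = cn τ ∧ (ν i).w τ ≠ 0 := by
    intro π hπ
    by_cases h0 : π 0 = x₀
    · have hπ' : π = cn (Fin.tail π) := by
        simp only [cn]
        rw [← h0, Fin.cons_self_tail]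
      rw [hπ', hWcn] at hπ
      obtain ⟨i, -, hi⟩ := Finset.exists_ne_zero_of_sum_ne_zero hπ
      exact ⟨i, _, hπ', right_ne_zero_of_mul hi⟩
    · simp [W, h0] at hπ
  have hsum : ∀ {Y : Type _} [AddCommGroup Y] [Module ℝ Y] (F : (Fin (T + 2) → X) → Y),
      ∑ π ∈ S, W π • F π = ∑ i, l i • ∑ τ ∈ (ν i).supp, (ν i).w τ • F (cn τ) := by
    intro Y _ _ F
    simp only [S]
    rw [Finset.sum_image (fun a _ b _ h => hcn h)]
    simp_rw [hWcn, Finset.sum_smul]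
    rw [Finset.sum_comm]
    refine Finset.sum_congr rfl fun i _ => ?_
    rw [Finset.smul_sum]
    symm
    simp_rw [mul_smul]
    apply Finset.sum_subset
    · exact Finset.subset_biUnion_of_mem (fun i => (ν i).supp) (Finset.mem_univ i)
    · intro τ _ hτ
      rw [(ν i).zero_off τ hτ]; simp
  have hsumR : ∀ (F : (Fin (T + 2) → X) → ℝ),
      ∑ π ∈ S, W π * F π = ∑ i, l i * ∑ τ ∈ (ν i).supp, (ν i).w τ * F (cn τ) := by
    intro F
    simp only [S]
    rw [Finset.sum_image (fun a _ b _ h => hcn h)]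
    simp_rw [hWcn, Finset.sum_mul]
    rw [Finset.sum_comm]
    refine Finset.sum_congr rfl fun i _ => ?_
    rw [Finset.mul_sum]
    symm
    simp_rw [mul_assoc]
    apply Finset.sum_subset
    · exact Finset.subset_biUnion_of_mem (fun i => (ν i).supp) (Finset.mem_univ i)
    · intro τ _ hτ
      rw [(ν i).zero_off τ hτ]; simp
  refine ⟨⟨S, W, ?_, ?_, ?_, ?_, ?_⟩, hsumR, hW⟩
  · intro π
    simp only [W]
    split_ifs
    · exact Finset.sum_nonneg fun i _ => mul_nonneg (hl i) ((ν i).nonneg _)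
    · exact le_rfl
  · intro π hπ
    by_contra h
    obtain ⟨i, τ, rfl, hτ⟩ := hW π h
    apply hπ
    refine Finset.mem_image_of_mem _ ?_
    refine Finset.mem_biUnion.2 ⟨i, Finset.mem_univ i, ?_⟩
    by_contra h'
    exact hτ ((ν i).zero_off _ h')
  · have := hsumR (fun _ => 1)
    simp only [mul_one, (ν _).total, hl1] at this
    exact this
  · intro π _ hπ
    obtain ⟨i, τ, rfl, hτ⟩ := hW π hπ
    simp [cn]
  · intro t h hh
    have h1 := hsum (fun π => h π • (π t.succ - π t.castSucc))
    simp only [smul_smul] at h1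
    rw [h1]
    clear h1
    induction t using Fin.cases with
    | zero =>
      have hc : ∀ τ, h (cn τ) = h (cn 0) := by
        intro τ
        apply hh
        intro s hs
        have : s = 0 := le_antisymm hs (Fin.zero_le _)
        subst this
        simp [cn]
      have h2 : ∀ i, ∑ τ ∈ (ν i).supp, ((ν i).w τ * h (cn τ)) •
          (cn τ (Fin.succ 0) - cn τ (Fin.castSucc 0)) = h (cn 0) • (x i - x₀) := by
        intro i
        rw [← one_smul ℝ (h (cn 0) • (x i - x₀)), ← (ν i).total, Finset.sum_smul]
        refine Finset.sum_congr rfl fun τ hτ => ?_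
        rw [mul_smul, hc]
        by_cases hw : (ν i).w τ = 0
        · simp [hw]
        · have := (ν i).init τ hτ hw
          simp [cn, this]
      simp_rw [h2]
      have h3 : ∑ i, l i • h (cn 0) • (x i - x₀) = h (cn 0) • ∑ i, l i • (x i - x₀) := by
        rw [Finset.smul_sum]
        exact Finset.sum_congr rfl fun i _ => smul_comm _ _ _
      rw [h3]
      simp_rw [smul_sub]
      rw [Finset.sum_sub_distrib, hx, ← Finset.sum_smul, hl1]
      simp
    | succ t =>
      apply Finset.sum_eq_zero
      intro i _
      have := (ν i).mart t (fun τ => h (cn τ)) (by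
        intro π π' hππ
        apply hh
        intro s hs
        induction s using Fin.cases with
        | zero => simp [cn]
        | succ s =>
          simp only [cn, Fin.cons_succ]
          apply hππ
          rw [← Fin.succ_castSucc] at hs
          exact Fin.succ_le_succ_iff.1 hs)
      simp only [cn, ← Fin.succ_castSucc, Fin.cons_succ] at this ⊢
      rw [this, smul_zero]

/-- Stop seeing the path after time `t`. -/
noncomputable def pathFreeze {n T : ℕ} (t : Fin (T + 1)) (π : Fin (T + 1) → Fin n → ℝ) :
    Fin (T + 1) → Fin n → ℝ := fun s => if s ≤ t then π s else 0

theorem measurable_pathFreeze {n T : ℕ} (t : Fin (T + 1)) :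
    Measurable (pathFreeze (n := n) t) := by
  refine measurable_pi_lambda _ fun s => ?_
  unfold pathFreeze
  by_cases h : s ≤ t
  · simp only [h, if_true]; exact measurable_pi_apply s
  · simp only [h, if_false]; exact measurable_const

/-- Laws of martingales started at `x₀`. -/
structure GoodLaw {n T : ℕ} (x₀ : Fin n → ℝ) (P : Measure (Fin (T + 1) → Fin n → ℝ)) : Prop where
  prob : IsProbabilityMeasure P
  init : ∀ᵐ π ∂P, π 0 = x₀
  int : ∀ t, Integrable (fun π => π t) P
  mart : ∀ t : Fin T, ∀ B, MeasurableSet B →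
    ∫ π in pathFreeze t.castSucc ⁻¹' B, (π t.succ - π t.castSucc) ∂P = 0

open ProbabilityTheory in
theorem goodLaw_main (n : ℕ) : ∀ (T : ℕ) (x₀ : Fin n → ℝ) (P : Measure (Fin (T + 1) → Fin n → ℝ)),
    GoodLaw x₀ P → ∀ g : (Fin (T + 1) → Fin n → ℝ) → ℝ, Measurable g → Integrable g P →
    ∀ A, MeasurableSet A → (∀ᵐ π ∂P, π ∈ A) →
    ∃ ν : MartLaw (Fin n → ℝ) T x₀, (∀ π, ν.w π ≠ 0 → π ∈ A) ∧
      ∑ π ∈ ν.supp, ν.w π * g π = ∫ π, g π ∂P := by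
  intro T
  induction T with
  | zero =>
    intro x₀ P hP g hg hgi A hA hPA
    classical
    have := hP.prob
    have hc : ∀ᵐ π ∂P, π = fun _ => x₀ := by
      filter_upwards [hP.init] with π hπ
      funext s
      rw [Fin.fin_one_eq_zero s, hπ]
    obtain ⟨π, h1, h2⟩ := (hc.and hPA).exists
    subst h1
    refine ⟨⟨{fun _ => x₀}, fun π => if π = (fun _ => x₀) then 1 else 0, ?_, ?_, ?_, ?_, ?_⟩, ?_, ?_⟩
    · intro π; split_ifs <;> norm_num
    · intro π hπ; simpa using hπ
    · simp
    · intro π hπ _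
      rw [Finset.mem_singleton.1 hπ]
    · intro t; exact t.elim0
    · intro π hπ
      have : π = fun _ => x₀ := by by_contra h; simp [h] at hπ
      rwa [this]
    · have : ∫ π, g π ∂P = ∫ π, g (fun _ => x₀) ∂P := by
        apply integral_congr_ae
        filter_upwards [hc] with π hπ
        rw [hπ]
      rw [this]
      simp
  | succ T ih =>
    intro x₀ P hP g hg hgi A hA hPA
    have := hP.prob
    let X1 : (Fin (T + 2) → Fin n → ℝ) → Fin n → ℝ := fun π => π 1
    let Y : (Fin (T + 2) → Fin n → ℝ) → (Fin (T + 1) → Fin n → ℝ) := fun π s => π s.succ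
    have hX1 : Measurable X1 := measurable_pi_apply _
    have hY : Measurable Y := measurable_pi_lambda _ fun s => measurable_pi_apply _
    have hJ : Measurable fun π => (X1 π, Y π) := hX1.prodMk hY
    let cn : (Fin (T + 1) → Fin n → ℝ) → (Fin (T + 2) → Fin n → ℝ) := fun τ => Fin.cons x₀ τ
    have hcn : Measurable cn := by
      refine measurable_pi_lambda _ fun s => ?_
      induction s using Fin.cases with
      | zero => simp only [cn, Fin.cons_zero]; exact measurable_const
      | succ s => simp only [cn, Fin.cons_succ]; exact measurable_pi_apply _
    have hcnY : ∀ᵐ π ∂P, cn (Y π) = π := by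
      filter_upwards [hP.init] with π hπ
      simp only [cn, Y]
      rw [← hπ]
      exact Fin.cons_self_tail π
    let q := P.map X1
    have : IsProbabilityMeasure q := Measure.isProbabilityMeasure_map hX1.aemeasurable
    let κ := condDistrib Y X1 P
    have hdis : q ⊗ₘ κ = P.map fun π => (X1 π, Y π) := compProd_map_condDistrib hY.aemeasurable
    have hIntEq : ∀ {W : Type} [NormedAddCommGroup W] [NormedSpace ℝ W]
        (F : (Fin (T + 1) → Fin n → ℝ) → W), StronglyMeasurable F → Integrable (fun π => F (Y π)) P →
        Integrable (fun p : (Fin n → ℝ) × (Fin (T + 1) → Fin n → ℝ) => F p.2) (q ⊗ₘ κ) := by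
      intro W _ _ F hF hFi
      rw [hdis, integrable_map_measure _ hJ.aemeasurable]
      · exact hFi
      · exact (hF.comp_measurable measurable_snd).aestronglyMeasurable
    -- a.e. properties
    have h1 : ∀ᵐ x ∂q, ∀ᵐ τ ∂κ x, τ 0 = x := by
      have : ∀ᵐ p ∂(q ⊗ₘ κ), p.2 0 = p.1 := by
        rw [hdis, ae_map_iff hJ.aemeasurable]
        · exact Filter.Eventually.of_forall fun π => rfl
        · exact measurableSet_eq_fun ((measurable_pi_apply 0).comp measurable_snd) measurable_fst
      exact Measure.ae_ae_of_ae_compProd this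
    have h2 : ∀ᵐ x ∂q, ∀ᵐ τ ∂κ x, cn τ ∈ A := by
      have : ∀ᵐ p ∂(q ⊗ₘ κ), cn p.2 ∈ A := by
        rw [hdis, ae_map_iff hJ.aemeasurable]
        · filter_upwards [hcnY, hPA] with π h h'
          rwa [h]
        · exact (hcn.comp measurable_snd) hA
      exact Measure.ae_ae_of_ae_compProd this
    have hgY : Integrable (fun π => g (cn (Y π))) P := by
      refine hgi.congr ?_
      filter_upwards [hcnY] with π h
      rw [h]
    have hgc : Measurable fun τ => g (cn τ) := hg.comp hcn
    have hgI := hIntEq (fun τ => g (cn τ)) hgc.stronglyMeasurable hgY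
    have h3 : ∀ᵐ x ∂q, Integrable (fun τ => g (cn τ)) (κ x) :=
      ((Measure.integrable_compProd_iff hgI.aestronglyMeasurable).1 hgI).1
    have hG : Integrable (fun x => ∫ τ, g (cn τ) ∂κ x) q := by
      have := hgI.integral_compProd
      simpa using this
    have hGint : ∫ x, ∫ τ, g (cn τ) ∂κ x ∂q = ∫ π, g π ∂P := by
      rw [← Measure.integral_compProd hgI, hdis, integral_map hJ.aemeasurable]
      · apply integral_congr_ae
        filter_upwards [hcnY] with π h
        simp only [h]
      · exact (hgc.comp measurable_snd).aestronglyMeasurable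
    have hcoord : ∀ t : Fin (T + 1), Integrable
        (fun p : (Fin n → ℝ) × (Fin (T + 1) → Fin n → ℝ) => p.2 t) (q ⊗ₘ κ) := fun t =>
      hIntEq (fun τ => τ t) (measurable_pi_apply t).stronglyMeasurable (hP.int t.succ)
    have h4 : ∀ᵐ x ∂q, ∀ t : Fin (T + 1), Integrable (fun τ => τ t) (κ x) := by
      rw [ae_all_iff]
      intro t
      exact ((Measure.integrable_compProd_iff (hcoord t).aestronglyMeasurable).1 (hcoord t)).1
    obtain ⟨S, hSc, hSg, hSpi, hSu⟩ := exists_countable_pi (Fin (T + 1) → Fin n → ℝ)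
    have hSm : ∀ B ∈ S, MeasurableSet B := fun B hB => by
      rw [hSg]; exact MeasurableSpace.measurableSet_generateFrom hB
    have h5 : ∀ᵐ x ∂q, ∀ t : Fin T, ∀ B ∈ S,
        ∫ τ in pathFreeze t.castSucc ⁻¹' B, (τ t.succ - τ t.castSucc) ∂κ x = 0 := by
      rw [ae_all_iff]
      intro t
      rw [ae_ball_iff hSc]
      intro B hB
      have hBm : MeasurableSet (pathFreeze t.castSucc ⁻¹' B) :=
        measurable_pathFreeze _ (hSm B hB)
      have hinc := (hcoord t.succ).sub (hcoord t.castSucc)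
      have hI : Integrable (fun x => ∫ τ in pathFreeze t.castSucc ⁻¹' B,
          (τ t.succ - τ t.castSucc) ∂κ x) q := by
        have := (hinc.indicator (measurable_snd hBm)).integral_compProd
        simp only [Kernel.const_apply, Kernel.prodMkLeft_apply] at this
        refine this.congr (Filter.Eventually.of_forall fun x => ?_)
        dsimp only
        rw [← integral_indicator hBm]
        rfl
      refine hI.ae_eq_zero_of_forall_setIntegral_eq_zero fun D hD _ => ?_
      have := Measure.setIntegral_compProd hD hBm hinc.integrableOn
      simp only [Pi.sub_apply] at this
      rw [← this, hdis, setIntegral_map (hD.prod hBm) _ hJ.aemeasurable]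
      · have hm := hP.mart t.succ
          {π | X1 π ∈ D ∧ Y π ∈ pathFreeze t.castSucc ⁻¹' B} ((hX1 hD).inter (hY hBm))
        have e1 : ∀ π, X1 (pathFreeze t.succ.castSucc π) = X1 π   := by
          intro π
          simp only [X1, pathFreeze]
          rw [if_pos]
          rw [← Fin.succ_castSucc, ← Fin.succ_zero_eq_one, Fin.succ_le_succ_iff]
          exact Fin.zero_le _
        have e2 : ∀ π, pathFreeze t.castSucc (Y (pathFreeze t.succ.castSucc π))
            = pathFreeze t.castSucc (Y π) := by
          intro π
          funext s
          simp only [Y, pathFreeze, ← Fin.succ_castSucc, Fin.succ_le_succ_iff]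
          split_ifs <;> rfl
        have e3 : pathFreeze t.succ.castSucc ⁻¹'
            {π | X1 π ∈ D ∧ Y π ∈ pathFreeze t.castSucc ⁻¹' B} =
            (fun π => (X1 π, Y π)) ⁻¹' D ×ˢ (pathFreeze t.castSucc ⁻¹' B) := by
          ext π
          simp only [Set.mem_preimage, Set.mem_setOf_eq, Set.mem_prod, e1 π, e2 π]
        rw [e3] at hm
        exact hm
      · exact (((measurable_pi_apply t.succ).comp measurable_snd).sub
          ((measurable_pi_apply t.castSucc).comp measurable_snd)).aestronglyMeasurable
    have hgood : ∀ᵐ x ∂q, GoodLaw x (κ x) := by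
      filter_upwards [h1, h4, h5] with x h1 h4 h5
      refine ⟨inferInstance, h1, h4, fun t B hB => ?_⟩
      exact setIntegral_zero_of_gen (κ x) (measurable_pathFreeze _) _
        ((h4 t.succ).sub (h4 t.castSucc)) S hSg hSpi hSu (h5 t) B hB
    let C : Set (Fin n → ℝ) := {x | GoodLaw x (κ x) ∧ (∀ᵐ τ ∂κ x, cn τ ∈ A) ∧
      Integrable (fun τ => g (cn τ)) (κ x)}
    have hC : ∀ᵐ x ∂q, x ∈ C := by
      filter_upwards [hgood, h2, h3] with x a b c using ⟨a, b, c⟩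
    have hX1i : Integrable (fun x : Fin n → ℝ => x) q := by
      exact (integrable_map_measure measurable_id.aestronglyMeasurable hX1.aemeasurable).2 (hP.int 1)
    have hq0 : ∫ x, x ∂q = x₀ := by
      refine (integral_map hX1.aemeasurable measurable_id.aestronglyMeasurable).trans ?_
      have hm := hP.mart 0 Set.univ MeasurableSet.univ
      simp only [Set.preimage_univ, Measure.restrict_univ] at hm
      rw [integral_sub (hP.int _) (hP.int _), sub_eq_zero] at hm
      have h0 : ∫ π, π (Fin.castSucc (0 : Fin (T + 1))) ∂P = x₀ := by
        refine (integral_congr_ae (g := fun _ => x₀) hP.init).trans ?_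
        simp
      rw [h0] at hm
      exact hm
    let φ : (Fin n → ℝ) → (Fin n → ℝ) × ℝ := fun x => (x, ∫ τ, g (cn τ) ∂κ x)
    have hmem := bary_mem q ((Fin n → ℝ) × ℝ) (convexHull ℝ (φ '' C)) (convex_convexHull ℝ _)
      φ (hX1i.prodMk hG) (by
        filter_upwards [hC] with x hx
        exact subset_convexHull ℝ _ ⟨x, hx, rfl⟩)
    rw [integral_pair hX1i hG, hq0, hGint, mem_convexHull_iff_exists_fintype] at hmem
    obtain ⟨ι, _, l, z, hl, hl1, hz, hsum⟩ := hmem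
    choose x hxC hxz using hz
    have hs1 : ∑ i, l i • x i = x₀ := by
      have := congrArg Prod.fst hsum
      simpa [Prod.fst_sum, ← hxz, φ] using this
    have hs2 : ∑ i, l i * ∫ τ, g (cn τ) ∂κ (x i) = ∫ π, g π ∂P := by
      have := congrArg Prod.snd hsum
      simpa [Prod.snd_sum, ← hxz, φ] using this
    have hex : ∀ i, ∃ ν : MartLaw (Fin n → ℝ) T (x i), (∀ τ, ν.w τ ≠ 0 → τ ∈ cn ⁻¹' A) ∧
        ∑ τ ∈ ν.supp, ν.w τ * g (cn τ) = ∫ τ, g (cn τ) ∂κ (x i) := fun i =>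
      ih (x i) (κ (x i)) (hxC i).1 (fun τ => g (cn τ)) hgc (hxC i).2.2 (cn ⁻¹' A) (hcn hA)
        (hxC i).2.1
    choose ν hνA hνg using hex
    obtain ⟨ν', hF, hw⟩ := martLaw_glue l hl hl1 x hs1 ν
    refine ⟨ν', ?_, ?_⟩
    · intro π hπ
      obtain ⟨i, τ, rfl, hτ⟩ := hw π hπ
      exact hνA i τ hτ
    · rw [hF g, ← hs2]
      exact Finset.sum_congr rfl fun i _ => by rw [← hνg i]

theorem goodLaw_of_martingale {n T : ℕ} {x₀ : Fin n → ℝ} {Ω : Type} {m0 : MeasurableSpace Ω}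
    (μ : Measure Ω) [IsProbabilityMeasure μ] (ℱ : Filtration (Fin (T + 1)) m0)
    (M : Fin (T + 1) → Ω → Fin n → ℝ) (hM : Martingale M ℱ μ) (h0 : ∀ᵐ ω ∂μ, M 0 ω = x₀)
    (hΦ : Measurable fun ω t => M t ω) :
    GoodLaw x₀ (μ.map fun ω t => M t ω) := by
  refine ⟨Measure.isProbabilityMeasure_map hΦ.aemeasurable, ?_, fun t => ?_, fun t B hB => ?_⟩
  · rw [ae_map_iff hΦ.aemeasurable]
    · exact h0
    · exact measurableSet_eq_fun (measurable_pi_apply 0) measurable_const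
  · rw [integrable_map_measure (measurable_pi_apply t).aestronglyMeasurable hΦ.aemeasurable]
    exact hM.integrable t
  · rw [setIntegral_map (measurable_pathFreeze _ hB) _ hΦ.aemeasurable]
    · rw [integral_sub (hM.integrable _).integrableOn (hM.integrable _).integrableOn, sub_eq_zero]
      symm
      apply hM.setIntegral_eq t.castSucc_lt_succ.le
      have hm : Measurable[ℱ t.castSucc] fun ω => pathFreeze t.castSucc fun t => M t ω := by
        refine @measurable_pi_lambda _ _ _ (ℱ t.castSucc) _ _ fun s => ?_
        unfold pathFreeze
        by_cases h : s ≤ t.castSucc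
        · simp only [h, if_true]
          exact (hM.stronglyMeasurable s).measurable.mono (ℱ.mono h) le_rfl
        · simp only [h, if_false]; exact measurable_const
      exact hm hB
    · exact ((measurable_pi_apply t.succ).sub
          (measurable_pi_apply t.castSucc)).aestronglyMeasurable

theorem erealPosPart_eq (x : EReal) : erealPosPart x = x.toENNReal := rfl

theorem trunc_facts (x : EReal) (hx : x ≠ ⊥) (N : ℕ) :
    ENNReal.ofReal (min x (N : ℝ)).toReal = min (erealPosPart x) N ∧
    ENNReal.ofReal (-(min x (N : ℝ)).toReal) = erealPosPart (-x) ∧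
    (((min x (N : ℝ)).toReal : ℝ) : EReal) ≤ x := by
  induction x with
  | bot => exact absurd rfl hx
  | top =>
    rw [min_eq_right le_top, EReal.toReal_coe]
    simp [erealPosPart]
  | coe r =>
    have h : min (r : EReal) ((N : ℝ) : EReal) = ((min r N : ℝ) : EReal) :=
      (EReal.coe_strictMono.monotone.map_min).symm
    rw [h, EReal.toReal_coe]
    refine ⟨?_, ?_, ?_⟩
    · simp only [erealPosPart, EReal.coe_ne_top, if_false, EReal.toReal_coe]
      rw [(ENNReal.ofReal_mono).map_min, ENNReal.ofReal_natCast]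
    · rw [← EReal.coe_neg]
      simp only [erealPosPart, EReal.coe_ne_top, if_false, EReal.toReal_coe]
      rw [← max_neg_neg, ENNReal.ofReal_mono.map_max]
      rw [max_eq_left]
      rw [ENNReal.ofReal_of_nonpos (by simp)]
      exact zero_le
    · exact_mod_cast min_le_left _ _

theorem ereal_coe_sum {ι : Type*} (s : Finset ι) (F : ι → ℝ) :
    ((∑ i ∈ s, F i : ℝ) : EReal) = ∑ i ∈ s, (F i : EReal) :=
  map_sum (⟨⟨Real.toEReal, EReal.coe_zero⟩, EReal.coe_add⟩ : ℝ →+ EReal) F s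

theorem erealExp_le_of_goodLaw {n T : ℕ} (x₀ : Fin n → ℝ) (P : Measure (Fin (T + 1) → Fin n → ℝ))
    (hP : GoodLaw x₀ P) (f : (Fin (T + 1) → Fin n → ℝ) → EReal) (hf : Measurable f) :
    erealExp P f ≤ ⨆ ν : MartLaw (Fin n → ℝ) T x₀, ν.exp f := by
  have := hP.prob
  have hpm : Measurable fun π => erealPosPart (f π) := by
    simp only [erealPosPart_eq]; fun_prop
  have hnm : Measurable fun π => erealPosPart (-f π) := by
    simp only [erealPosPart_eq]; fun_prop
  unfold erealExp
  by_cases hneg : ∫⁻ π, erealPosPart (-f π) ∂P = ⊤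
  · rw [hneg]; simp
  have hbot : ∀ᵐ π ∂P, f π ≠ ⊥ := by
    filter_upwards [ae_lt_top hnm hneg] with π hπ h
    rw [h] at hπ
    simp [erealPosPart] at hπ
  have hA : MeasurableSet {π | f π ≠ ⊥} := (hf (measurableSet_singleton ⊥)).compl
  set r := (∫⁻ π, erealPosPart (-f π) ∂P).toReal with hr
  have hr' : ((∫⁻ π, erealPosPart (-f π) ∂P : ENNReal) : EReal) = (r : EReal) := by
    rw [hr, EReal.coe_ennreal_toReal]
    exact hneg
  -- the truncated bound
  have key : ∀ N : ℕ, ((∫⁻ π, min (erealPosPart (f π)) N ∂P : ENNReal) : EReal)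
      ≤ (⨆ ν : MartLaw (Fin n → ℝ) T x₀, ν.exp f) + r := by
    intro N
    let g : (Fin (T + 1) → Fin n → ℝ) → ℝ := fun π => (min (f π) (N : ℝ)).toReal
    have hg : Measurable g := (hf.min measurable_const).ereal_toReal
    have e1 : ∫⁻ π, ENNReal.ofReal (g π) ∂P = ∫⁻ π, min (erealPosPart (f π)) N ∂P := by
      apply lintegral_congr_ae
      filter_upwards [hbot] with π hπ using (trunc_facts _ hπ N).1
    have e2 : ∫⁻ π, ENNReal.ofReal (-g π) ∂P = ∫⁻ π, erealPosPart (-f π) ∂P := by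
      apply lintegral_congr_ae
      filter_upwards [hbot] with π hπ using (trunc_facts _ hπ N).2.1
    have f1 : ∫⁻ π, min (erealPosPart (f π)) N ∂P ≠ ⊤ := by
      refine ne_top_of_le_ne_top (b := ∫⁻ π, (N : ENNReal) ∂P) (by simp)
        (lintegral_mono fun π => min_le_right _ _)
    have hgi : Integrable g P := by
      refine ⟨hg.aestronglyMeasurable, ?_⟩
      rw [hasFiniteIntegral_iff_norm]
      have : ∀ π, ENNReal.ofReal ‖g π‖ ≤ ENNReal.ofReal (g π) + ENNReal.ofReal (-g π) := by
        intro π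
        rw [Real.norm_eq_abs, abs_eq_max_neg, ENNReal.ofReal_mono.map_max]
        exact max_le le_self_add le_add_self
      refine (lintegral_mono this).trans_lt ?_
      rw [lintegral_add_left (by fun_prop), e1, e2]
      exact ENNReal.add_lt_top.2 ⟨lt_top_iff_ne_top.2 f1, lt_top_iff_ne_top.2 hneg⟩
    obtain ⟨ν, hν, hνg⟩ := goodLaw_main n T x₀ P hP g hg hgi _ hA hbot
    have h1 : ((∫ π, g π ∂P : ℝ) : EReal) ≤ ν.exp f := by
      rw [← hνg, ereal_coe_sum]
      refine Finset.sum_le_sum fun π _ => ?_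
      by_cases hw : ν.w π = 0
      · simp [hw]
      · rw [EReal.coe_mul]
        exact mul_le_mul_of_nonneg_left (trunc_facts _ (hν π hw) N).2.2
          (EReal.coe_nonneg.2 (ν.nonneg π))
    rw [integral_eq_lintegral_pos_part_sub_lintegral_neg_part hgi, e1, e2] at h1
    have h2 := h1.trans (le_iSup (fun ν : MartLaw (Fin n → ℝ) T x₀ => ν.exp f) ν)
    rw [EReal.coe_sub, EReal.coe_ennreal_toReal f1] at h2
    exact (EReal.sub_le_iff_le_add (Or.inl (EReal.coe_ne_bot _)) (Or.inl (EReal.coe_ne_top _))).1 h2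
  rw [hr']
  rw [EReal.sub_le_iff_le_add (Or.inl (EReal.coe_ne_bot _)) (Or.inl (EReal.coe_ne_top _))]
  have hlim : Filter.Tendsto (fun N : ℕ => ∫⁻ π, min (erealPosPart (f π)) N ∂P) Filter.atTop
      (nhds (∫⁻ π, erealPosPart (f π) ∂P)) := by
    apply lintegral_tendsto_of_tendsto_of_monotone
    · intro N; exact (hpm.min measurable_const).aemeasurable
    · refine Filter.Eventually.of_forall fun π N N' h => ?_
      exact min_le_min_left _ (by exact_mod_cast h)
    · refine Filter.Eventually.of_forall fun π => ?_
      have : Filter.Tendsto (fun N : ℕ => min (erealPosPart (f π)) (N : ENNReal)) Filter.atTop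
          (nhds (min (erealPosPart (f π)) ⊤)) :=
        tendsto_const_nhds.min ENNReal.tendsto_nat_nhds_top
      simpa using this
  exact le_of_tendsto' ((continuous_coe_ennreal_ereal.tendsto _).comp hlim) key

theorem ereal_mul_eq (a : ℝ) (ha : 0 ≤ a) (x : EReal) :
    (a : EReal) * x = ((ENNReal.ofReal a * erealPosPart x : ENNReal) : EReal)
      - ((ENNReal.ofReal a * erealPosPart (-x) : ENNReal) : EReal) := by
  rcases ha.eq_or_lt with rfl | ha'
  · simp
  have hne : ENNReal.ofReal a ≠ 0 := by simpa using ha'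
  induction x with
  | bot => simp [erealPosPart, EReal.coe_mul_bot_of_pos ha', ENNReal.mul_top hne]
  | top => simp [erealPosPart, EReal.coe_mul_top_of_pos ha', ENNReal.mul_top hne]
  | coe r =>
    rw [← EReal.coe_neg]
    simp only [erealPosPart, EReal.coe_ne_top, if_false, EReal.toReal_coe]
    rw [← ENNReal.ofReal_mul ha, ← ENNReal.ofReal_mul ha, EReal.coe_ennreal_ofReal,
      EReal.coe_ennreal_ofReal, ← EReal.coe_mul, ← EReal.coe_sub]
    congr 1
    rcases le_total 0 r with h | h
    · have := mul_nonneg ha h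
      rw [max_eq_left this, max_eq_right (by linarith)]; simp
    · have := mul_nonpos_of_nonneg_of_nonpos ha h
      rw [max_eq_right this, max_eq_left (by linarith)]; simp

theorem ereal_sum_sub {ι : Type*} (s : Finset ι) (a b : ι → ENNReal) :
    ∑ i ∈ s, ((a i : EReal) - (b i : EReal)) =
      ((∑ i ∈ s, a i : ENNReal) : EReal) - ((∑ i ∈ s, b i : ENNReal) : EReal) := by
  classical
  induction s using Finset.induction_on with
  | empty => simp
  | insert i s hi ih =>
    rw [Finset.sum_insert hi, Finset.sum_insert hi, Finset.sum_insert hi, ih,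
      EReal.coe_ennreal_add, EReal.coe_ennreal_add]
    rw [EReal.add_sub_add_comm (Or.inl (EReal.coe_ennreal_ne_bot _))
      (Or.inr (EReal.coe_ennreal_ne_bot _))]

/-- The measure on path space of a simple martingale law. -/
noncomputable def MartLaw.toMeas {n T : ℕ} {x₀ : Fin n → ℝ} (ν : MartLaw (Fin n → ℝ) T x₀) :
    @Measure (Fin (T + 1) → Fin n → ℝ) ⊤ :=
  ∑ π ∈ ν.supp, ENNReal.ofReal (ν.w π) • @Measure.dirac _ ⊤ π

theorem toMeas_lintegral {n T : ℕ} {x₀ : Fin n → ℝ} (ν : MartLaw (Fin n → ℝ) T x₀)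
    (F : (Fin (T + 1) → Fin n → ℝ) → ENNReal) :
    @lintegral _ ⊤ ν.toMeas F = ∑ π ∈ ν.supp, ENNReal.ofReal (ν.w π) * F π := by
  letI : MeasurableSpace (Fin (T + 1) → Fin n → ℝ) := ⊤
  unfold MartLaw.toMeas
  rw [lintegral_finsetSum_measure]
  refine Finset.sum_congr rfl fun π _ => ?_
  have hF : Measurable F := fun _ _ => trivial
  rw [lintegral_smul_measure, lintegral_dirac' _ hF]
  rfl

theorem toMeas_integrable {n T : ℕ} {x₀ : Fin n → ℝ} (ν : MartLaw (Fin n → ℝ) T x₀)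
    (F : (Fin (T + 1) → Fin n → ℝ) → Fin n → ℝ) :
    @Integrable _ _ _ _ ⊤ F ν.toMeas := by
  letI : MeasurableSpace (Fin (T + 1) → Fin n → ℝ) := ⊤
  have hF : Measurable F := fun _ _ => trivial
  refine ⟨hF.aestronglyMeasurable, ?_⟩
  unfold HasFiniteIntegral
  rw [toMeas_lintegral]
  exact ENNReal.sum_lt_top.2 fun π _ => ENNReal.mul_lt_top ENNReal.ofReal_lt_top enorm_lt_top

theorem toMeas_integral {n T : ℕ} {x₀ : Fin n → ℝ} (ν : MartLaw (Fin n → ℝ) T x₀)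
    (F : (Fin (T + 1) → Fin n → ℝ) → Fin n → ℝ) :
    @integral _ _ _ _ ⊤ ν.toMeas F = ∑ π ∈ ν.supp, ν.w π • F π := by
  letI : MeasurableSpace (Fin (T + 1) → Fin n → ℝ) := ⊤
  have hF : Measurable F := fun _ _ => trivial
  unfold MartLaw.toMeas
  rw [integral_finsetSum_measure]
  · refine Finset.sum_congr rfl fun π _ => ?_
    rw [integral_smul_measure, integral_dirac' _ _ hF.stronglyMeasurable,
      ENNReal.toReal_ofReal (ν.nonneg π)]
  · intro π _
    refine Integrable.smul_measure ?_ ENNReal.ofReal_ne_top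
    refine ⟨hF.aestronglyMeasurable, ?_⟩
    unfold HasFiniteIntegral
    have hE : Measurable fun π => ‖F π‖ₑ := fun _ _ => trivial
    rw [lintegral_dirac' _ hE]
    exact enorm_lt_top

theorem pathFreeze_freeze {n T : ℕ} {s t : Fin (T + 1)} (h : s ≤ t)
    (π : Fin (T + 1) → Fin n → ℝ) : pathFreeze s (pathFreeze t π) = pathFreeze s π := by
  funext u
  unfold pathFreeze
  by_cases hu : u ≤ s
  · simp [hu, hu.trans h]
  · simp [hu]

/-- The natural filtration on path space (with the discrete σ-algebra). -/
noncomputable def pathFilt (n T : ℕ) :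
    @Filtration (Fin (T + 1) → Fin n → ℝ) (Fin (T + 1)) _ ⊤ :=
  @Filtration.mk _ _ _ ⊤ (fun t => MeasurableSpace.comap (pathFreeze t) ⊤)
    (by
      rintro s t h _ ⟨B, -, rfl⟩
      refine ⟨pathFreeze s ⁻¹' B, trivial, ?_⟩
      ext π
      simp [pathFreeze_freeze h])
    (fun _ => le_top)

theorem martLaw_exp_eq {n T : ℕ} {x₀ : Fin n → ℝ} (ν : MartLaw (Fin n → ℝ) T x₀)
    (f : (Fin (T + 1) → Fin n → ℝ) → EReal) :
    ν.exp f = @erealExp _ ⊤ ν.toMeas f := by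
  unfold erealExp MartLaw.exp
  rw [toMeas_lintegral, toMeas_lintegral, ← ereal_sum_sub]
  exact Finset.sum_congr rfl fun π _ => ereal_mul_eq _ (ν.nonneg π) _

theorem toMeas_prob {n T : ℕ} {x₀ : Fin n → ℝ} (ν : MartLaw (Fin n → ℝ) T x₀) :
    @IsProbabilityMeasure _ ⊤ ν.toMeas := by
  letI : MeasurableSpace (Fin (T + 1) → Fin n → ℝ) := ⊤
  refine ⟨?_⟩
  rw [← lintegral_one, toMeas_lintegral]
  simp only [mul_one]
  rw [← ENNReal.ofReal_sum_of_nonneg (fun π _ => ν.nonneg π), ν.total, ENNReal.ofReal_one]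

theorem toMeas_init {n T : ℕ} {x₀ : Fin n → ℝ} (ν : MartLaw (Fin n → ℝ) T x₀) :
    ∀ᵐ π ∂ν.toMeas, π 0 = x₀ := by
  letI : MeasurableSpace (Fin (T + 1) → Fin n → ℝ) := ⊤
  classical
  rw [ae_iff, ← lintegral_indicator_one (s := {π : Fin (T + 1) → Fin n → ℝ | ¬ π 0 = x₀}) trivial,
    toMeas_lintegral]
  refine Finset.sum_eq_zero fun π hπ => ?_
  by_cases hw : ν.w π = 0
  · simp [hw]
  · simp [ν.init π hπ hw]

theorem toMeas_martingale {n T : ℕ} {x₀ : Fin n → ℝ} (ν : MartLaw (Fin n → ℝ) T x₀) :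
    @Martingale (Fin (T + 1) → Fin n → ℝ) (Fin n → ℝ) (Fin (T + 1)) _ ⊤ _ _
      (fun t π => π t) (pathFilt n T) ν.toMeas := by
  letI : MeasurableSpace (Fin (T + 1) → Fin n → ℝ) := ⊤
  have := toMeas_prob ν
  classical
  have hsm : ∀ t, StronglyMeasurable[pathFilt n T t] fun π : Fin (T + 1) → Fin n → ℝ => π t := by
    intro t
    have : Measurable[pathFilt n T t] fun π : Fin (T + 1) → Fin n → ℝ => π t := by
      intro B _
      refine ⟨(fun π => π t) ⁻¹' B, trivial, ?_⟩
      ext π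
      simp [pathFreeze]
    exact this.stronglyMeasurable
  refine ⟨hsm, fun i j hij => ?_⟩
  symm
  refine ae_eq_condExp_of_forall_setIntegral_eq ((pathFilt n T).le i) (toMeas_integrable ν _)
    (fun s _ _ => (toMeas_integrable ν _).integrableOn) ?_ (hsm i).aestronglyMeasurable
  rintro _ ⟨B, -, rfl⟩ -
  have hstep : ∀ t : Fin T, i ≤ t.castSucc →
      ∫ π in pathFreeze i ⁻¹' B, π t.castSucc ∂ν.toMeas
        = ∫ π in pathFreeze i ⁻¹' B, π t.succ ∂ν.toMeas := by
    intro t ht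
    have hBm : MeasurableSet (pathFreeze i ⁻¹' B) := trivial
    symm
    rw [← sub_eq_zero, ← integral_sub (toMeas_integrable ν _).integrableOn
      (toMeas_integrable ν _).integrableOn, ← integral_indicator hBm, toMeas_integral]
    have := ν.mart t (fun π => if pathFreeze i π ∈ B then 1 else 0) (by
      intro π π' h
      have : pathFreeze i π = pathFreeze i π' := by
        funext s
        unfold pathFreeze
        split_ifs with hs
        · exact h s (hs.trans ht)
        · rfl
      simp only [this])
    rw [← this]
    refine Finset.sum_congr rfl fun π _ => ?_
    by_cases hB : pathFreeze i π ∈ B <;> simp [Set.indicator, hB]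
  induction j using Fin.induction with
  | zero =>
    have : i = 0 := le_antisymm hij (Fin.zero_le _)
    subst this; rfl
  | succ t ih =>
    rcases hij.eq_or_lt with h | h
    · subst h; rfl
    · have ht : i ≤ t.castSucc := Fin.le_castSucc_iff.2 h
      rw [ih ht, hstep t ht]

/-- For Borel measurable `f : (ℝⁿ)^{T+1} → EReal`,
`sup_{μ ∈ M^T(x₀)} μ[f] = sup_M E[f(M₀,…,M_T)]`, the right-hand supremum being over all
`ℝⁿ`-valued martingales `M₀,…,M_T` with `M₀ = x₀`, each on its own filtered probability
space. (Equality of the supremum over simple martingale laws with the supremum over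
general martingales is expressed by the two clauses below.) -/
theorem sup_martLaw_eq_sup_martingales (n T : ℕ) (x₀ : Fin n → ℝ)
    (f : (Fin (T + 1) → Fin n → ℝ) → EReal) (hf : Measurable f) :
    (∀ (Ω : Type) (m0 : MeasurableSpace Ω) (μ : Measure Ω),
        IsProbabilityMeasure μ →
        ∀ (ℱ : Filtration (Fin (T + 1)) m0) (M : Fin (T + 1) → Ω → Fin n → ℝ),
          Martingale M ℱ μ → (∀ᵐ ω ∂μ, M 0 ω = x₀) →
          erealExp μ (fun ω => f fun t => M t ω)
            ≤ ⨆ ν : MartLaw (Fin n → ℝ) T x₀, ν.exp f) ∧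
    (∀ b : EReal,
      (∀ (Ω : Type) (m0 : MeasurableSpace Ω) (μ : Measure Ω),
        IsProbabilityMeasure μ →
        ∀ (ℱ : Filtration (Fin (T + 1)) m0) (M : Fin (T + 1) → Ω → Fin n → ℝ),
          Martingale M ℱ μ → (∀ᵐ ω ∂μ, M 0 ω = x₀) →
          erealExp μ (fun ω => f fun t => M t ω) ≤ b) →
      (⨆ ν : MartLaw (Fin n → ℝ) T x₀, ν.exp f) ≤ b) := by
  constructor
  · intro Ω m0 μ hμ ℱ M hM h0
    have hΦ : Measurable fun ω t => M t ω := measurable_pi_lambda _ fun t =>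
      (hM.stronglyMeasurable t).measurable.mono (ℱ.le t) le_rfl
    have h := erealExp_le_of_goodLaw x₀ _ (goodLaw_of_martingale μ ℱ M hM h0 hΦ) f hf
    unfold erealExp at h ⊢
    rw [lintegral_map _ hΦ, lintegral_map _ hΦ] at h
    · exact h
    · simp only [erealPosPart_eq]; fun_prop
    · simp only [erealPosPart_eq]; fun_prop
  · intro b hb
    refine iSup_le fun ν => ?_
    rw [martLaw_exp_eq]
    exact hb _ ⊤ ν.toMeas (toMeas_prob ν) (pathFilt n T) (fun t π => π t) (toMeas_martingale ν)
      (toMeas_init ν)
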